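/- Let (M, ρ, μ) be a metric measure space satisfying the doubling condition of dimension d with constant c₀' ≥ 1. Let 1 ≤ p < 2 and let k > d(1 + 2/p). Then there is a constant c = c(p, k, c_K, c₀', d) > 0 such that for every δ > 0, every x₀ ∈ M, every R ≥ δ/2, every measurable kernel K : M × M → ℝ satisfying |K(x, u)| ≤ c_K μ(B(x, δ))^{−1} (1 + ρ(x, u)/δ)^{−k} for all x, u ∈ M, and every pdf f on M supported in the ball B(x₀, R), one has (∫_M (∫_M |K(x, u)| f(u) dμ(u))^{p/2} dμ(x))^{1/p} ≤ c μ(B(x₀, R))^{1/p − 1/2}. -/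

import Mathlib

/-!
The exponent `q = p / 2` is less than `1`, so the `q`-th power of the smoothed density
`G x = ∫ |K x u| f u dμ(u)` is controlled by two different mechanisms.

* On the ball `B(x₀, 2R)`, Hölder's inequality gives `∫ G ^ q ≤ (∫ G) ^ q * μ(B(x₀, 2R)) ^ (1 - q)`,
  and `∫ G` is bounded by a constant thanks to Tonelli and the uniform bound on
  `∫ |K x u| dμ(x)` (`DoublingCond.lintegral_kernel_le`).
* Off that ball, every `u` in the support of `f` satisfies `ρ(x, u) ≥ ρ(x, x₀) / 2`, so `G x`
  decays like `μ(B(x₀, δ))⁻¹ * (1 + ρ(x, x₀) / δ) ^ (d - k)`. The `q`-th power has decay exponent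
  `(k - d) * q`, and the hypothesis on `k` says exactly that it exceeds `d`.

Both parts rest on `DoublingCond.lintegral_decay_le`: in a doubling space of dimension `d`, a
decay of order `s > d` at scale `δ` around `y` integrates to at most a constant times
`μ(B(y, δ))`, which is seen by summing over dyadic balls. The centre of `μ(B(x, δ))⁻¹` is moved at the cost of a factor
`(1 + ρ / δ) ^ d` (`DoublingCond.inv_measure_ball_le`).

The hypotheses do not say that balls have finite positive measure. If one ball is null, `μ = 0`
and there is no density; if one ball has infinite measure, then all do and the kernel vanishes.
-/

open MeasureTheory Metric
open scoped ENNReal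

/-- The doubling condition of dimension `d` with constant `c`. -/
def DoublingCond {M : Type} [MetricSpace M] [MeasurableSpace M] (μ : Measure M) (c d : ℝ) : Prop :=
  ∀ (x : M) (r l : ℝ), 0 < r → 1 < l →
    μ (ball x (l * r)) ≤ ENNReal.ofReal (c * l ^ d) * μ (ball x r)

/-- The constant of the integral estimate for decay of order `s`: the sum over `n` of
`2 ^ (- n s) * (c * 2 ^ ((n + 1) d))`. -/
noncomputable def decayConst (c d s : ℝ) : ℝ≥0∞ :=
  ENNReal.ofReal (c * 2 ^ d) * (1 - ENNReal.ofReal (2 ^ (d - s)))⁻¹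

lemma decayConst_ne_top {c d s : ℝ} (hs : d < s) : decayConst c d s ≠ ∞ := by
  refine ENNReal.mul_ne_top ENNReal.ofReal_ne_top (ENNReal.inv_ne_top.2 ?_)
  have h : ENNReal.ofReal ((2 : ℝ) ^ (d - s)) < 1 := by
    rw [ENNReal.ofReal_lt_one]
    exact Real.rpow_lt_one_of_one_lt_of_neg one_lt_two (by linarith)
  exact (tsub_pos_of_lt h).ne'

section Doubling

variable {M : Type} [MetricSpace M] [MeasurableSpace M] {μ : Measure M} {c d : ℝ}

lemma DoublingCond.le_of_one_le (hμ : DoublingCond μ c d) (hc : 1 ≤ c) (x : M) {r l : ℝ}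
    (hr : 0 < r) (hl : 1 ≤ l) :
    μ (ball x (l * r)) ≤ ENNReal.ofReal (c * l ^ d) * μ (ball x r) := by
  rcases hl.eq_or_lt with rfl | h
  · simpa using le_mul_of_one_le_left (zero_le (a := μ (ball x r))) (ENNReal.one_le_ofReal.2 hc)
  · exact hμ x r l hr h

lemma DoublingCond.measure_ball_le (hμ : DoublingCond μ c d) (hc : 1 ≤ c) (x y : M) {δ : ℝ}
    (hδ : 0 < δ) :
    μ (ball y δ) ≤ ENNReal.ofReal (c * (1 + dist x y / δ) ^ d) * μ (ball x δ) := by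
  have h0 : 0 ≤ dist x y / δ := by positivity
  refine le_trans (measure_mono ?_) (hμ.le_of_one_le hc x hδ (by linarith : 1 ≤ 1 + dist x y / δ))
  apply ball_subset_ball'
  rw [add_mul, div_mul_cancel₀ _ hδ.ne', dist_comm y x]
  linarith

/-- Moving the centre of the normalising factor costs `(1 + ρ / δ) ^ d`. -/
lemma DoublingCond.inv_measure_ball_le (hμ : DoublingCond μ c d) (hc : 1 ≤ c) (x y : M) {δ : ℝ}
    (hδ : 0 < δ) :
    (μ (ball x δ))⁻¹ ≤ ENNReal.ofReal (c * (1 + dist x y / δ) ^ d) * (μ (ball y δ))⁻¹ := by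
  have h := hμ.measure_ball_le hc x y hδ
  set D := ENNReal.ofReal (c * (1 + dist x y / δ) ^ d) with hD
  have hD0 : D ≠ 0 := by
    rw [hD, Ne, ENNReal.ofReal_eq_zero, not_le]
    positivity
  have hDt : D ≠ ∞ := ENNReal.ofReal_ne_top
  calc (μ (ball x δ))⁻¹ = D * (D * μ (ball x δ))⁻¹ := by
        rw [ENNReal.mul_inv (Or.inl hD0) (Or.inl hDt), ← mul_assoc,
          ENNReal.mul_inv_cancel hD0 hDt, one_mul]
    _ ≤ D * (μ (ball y δ))⁻¹ := by gcongr

/-- If some ball has infinite measure, so does every ball: enlarge a ball to contain it. -/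
lemma DoublingCond.measure_ball_eq_top (hμ : DoublingCond μ c d) (hc : 1 ≤ c) {x : M} {r : ℝ}
    (h : μ (ball x r) = ∞) (y : M) {δ : ℝ} (hδ : 0 < δ) : μ (ball y δ) = ∞ := by
  set l : ℝ := 1 + (|r| + dist x y) / δ with hl
  have h0 : 0 ≤ (|r| + dist x y) / δ := by positivity
  have hsub : ball x r ⊆ ball y (l * δ) := by
    apply ball_subset_ball'
    rw [hl, add_mul, div_mul_cancel₀ _ hδ.ne']
    linarith [le_abs_self r]
  have h1 := (measure_mono hsub).trans (hμ.le_of_one_le hc y hδ (by linarith : 1 ≤ l))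
  rw [h, top_le_iff] at h1
  by_contra h2
  exact ENNReal.mul_ne_top ENNReal.ofReal_ne_top h2 h1

lemma DoublingCond.measure_ball_ne_zero (hμ : DoublingCond μ c d) (hc : 1 ≤ c) (h0 : μ ≠ 0)
    (y : M) {δ : ℝ} (hδ : 0 < δ) : μ (ball y δ) ≠ 0 := by
  intro h
  apply h0
  rw [← Measure.measure_univ_eq_zero, ← iUnion_ball_nat y, measure_iUnion_null_iff]
  intro n
  have hn : (0 : ℝ) ≤ n / δ := by positivity
  have h1 := hμ.le_of_one_le hc y hδ (by linarith : 1 ≤ 1 + n / δ)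
  rw [h, mul_zero, nonpos_iff_eq_zero] at h1
  refine measure_mono_null (ball_subset_ball ?_) h1
  rw [add_mul, div_mul_cancel₀ _ hδ.ne']
  linarith

lemma sigmaFinite_of_measure_ball_ne_top (x : M) (h : ∀ r, μ (ball x r) ≠ ∞) : SigmaFinite μ :=
  ⟨⟨{ set := fun n => ball x n
      set_mem := fun _ => trivial
      finite := fun n => (h n).lt_top
      spanning := iUnion_ball_nat x }⟩⟩

/-- Decay of order `s` at scale `δ` integrates to at most a constant times the measure of the ball
of radius `δ`; the constant is finite when `s > d`, see `decayConst_ne_top`. -/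
lemma DoublingCond.lintegral_decay_le [BorelSpace M] (hμ : DoublingCond μ c d) (hc : 1 ≤ c)
    {s : ℝ} (hs0 : 0 ≤ s) (y : M) {δ : ℝ} (hδ : 0 < δ) :
    ∫⁻ x, ENNReal.ofReal ((1 + dist x y / δ) ^ (-s)) ∂μ ≤ decayConst c d s * μ (ball y δ) := by
  set g : ℕ → M → ℝ≥0∞ := fun n =>
    (ball y (2 ^ (n + 1) * δ)).indicator fun _ => ENNReal.ofReal (((2 : ℝ) ^ n) ^ (-s)) with hg
  have hpt (x : M) : ENNReal.ofReal ((1 + dist x y / δ) ^ (-s)) ≤ ∑' n, g n x := by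
    have h0 : 0 ≤ dist x y / δ := by positivity
    -- `n` is the dyadic level of `1 + ρ / δ`
    obtain ⟨n, hn1, hn2⟩ := exists_nat_pow_near (by linarith : 1 ≤ 1 + dist x y / δ) one_lt_two
    refine le_trans ?_ (ENNReal.le_tsum n)
    have hx : x ∈ ball y (2 ^ (n + 1) * δ) := by
      rw [mem_ball, ← div_lt_iff₀ hδ]
      linarith
    simp only [hg, Set.indicator_of_mem hx]
    exact ENNReal.ofReal_le_ofReal
      (Real.rpow_le_rpow_of_nonpos (by positivity) hn1 (by linarith))
  have hterm (n : ℕ) : ∫⁻ x, g n x ∂μ ≤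
      ENNReal.ofReal (c * 2 ^ d) * μ (ball y δ) * ENNReal.ofReal (2 ^ (d - s)) ^ n := by
    simp only [hg]
    rw [lintegral_indicator_const measurableSet_ball]
    have h1 := hμ.le_of_one_le hc y hδ (one_le_pow₀ one_le_two : (1 : ℝ) ≤ 2 ^ (n + 1))
    refine (mul_le_mul_right h1 _).trans (le_of_eq ?_)
    rw [← mul_assoc, ← ENNReal.ofReal_mul (by positivity), ← ENNReal.ofReal_pow (by positivity),
      mul_right_comm, ← ENNReal.ofReal_mul (by positivity)]
    congr 2
    rw [← Real.rpow_natCast, ← Real.rpow_natCast, ← Real.rpow_natCast, ← Real.rpow_mul two_pos.le,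
      ← Real.rpow_mul two_pos.le, ← Real.rpow_mul two_pos.le, mul_left_comm,
      ← Real.rpow_add two_pos, mul_assoc, ← Real.rpow_add two_pos]
    push_cast
    ring_nf
  calc ∫⁻ x, ENNReal.ofReal ((1 + dist x y / δ) ^ (-s)) ∂μ
      ≤ ∫⁻ x, ∑' n, g n x ∂μ := lintegral_mono hpt
    _ = ∑' n, ∫⁻ x, g n x ∂μ :=
        lintegral_tsum fun n => (measurable_const.indicator measurableSet_ball).aemeasurable
    _ ≤ ∑' n, ENNReal.ofReal (c * 2 ^ d) * μ (ball y δ) * ENNReal.ofReal (2 ^ (d - s)) ^ n :=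
        ENNReal.tsum_le_tsum hterm
    _ = decayConst c d s * μ (ball y δ) := by
        rw [ENNReal.tsum_mul_left, ENNReal.tsum_geometric, decayConst, mul_right_comm]

/-- The bound imposed on the kernel, with the ball recentred at the second variable. -/
lemma DoublingCond.kernel_bound_recentre (hμ : DoublingCond μ c d) (hc : 1 ≤ c) (k : ℝ)
    (x y : M) {δ : ℝ} (hδ : 0 < δ) :
    (μ (ball x δ))⁻¹ * ENNReal.ofReal ((1 + dist x y / δ) ^ (-k)) ≤
      ENNReal.ofReal c * (μ (ball y δ))⁻¹ * ENNReal.ofReal ((1 + dist x y / δ) ^ (-(k - d))) := by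
  refine (mul_le_mul_left (hμ.inv_measure_ball_le hc x y hδ) _).trans (le_of_eq ?_)
  have h0 : 0 < 1 + dist x y / δ := by positivity
  rw [mul_right_comm, ← ENNReal.ofReal_mul (by positivity), mul_right_comm (ENNReal.ofReal c),
    ← ENNReal.ofReal_mul (by positivity), mul_assoc c, ← Real.rpow_add h0]
  ring_nf

/-- Uniform bound for the mass of the kernel in its first variable. -/
lemma DoublingCond.lintegral_kernel_le [BorelSpace M] (hμ : DoublingCond μ c d) (hc : 1 ≤ c)
    {k cK : ℝ} (hk : d ≤ k) {δ : ℝ} (hδ : 0 < δ) (hfin : ∀ y r, μ (ball y r) ≠ ∞)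
    {K : M → M → ℝ} (hK : ∀ x u, ENNReal.ofReal |K x u| ≤ ENNReal.ofReal cK * (μ (ball x δ))⁻¹ *
      ENNReal.ofReal ((1 + dist x u / δ) ^ (-k))) (h0 : μ ≠ 0) (u : M) :
    ∫⁻ x, ENNReal.ofReal |K x u| ∂μ ≤
      ENNReal.ofReal cK * ENNReal.ofReal c * decayConst c d (k - d) := by
  calc ∫⁻ x, ENNReal.ofReal |K x u| ∂μ
      ≤ ∫⁻ x, (ENNReal.ofReal cK * ENNReal.ofReal c * (μ (ball u δ))⁻¹) *
          ENNReal.ofReal ((1 + dist x u / δ) ^ (-(k - d))) ∂μ := by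
        refine lintegral_mono fun x => (hK x u).trans ?_
        rw [mul_assoc, mul_assoc (ENNReal.ofReal cK), mul_assoc (ENNReal.ofReal cK)]
        gcongr ENNReal.ofReal cK * ?_
        exact hμ.kernel_bound_recentre hc k x u hδ
    _ ≤ (ENNReal.ofReal cK * ENNReal.ofReal c * (μ (ball u δ))⁻¹) *
          (decayConst c d (k - d) * μ (ball u δ)) := by
        rw [lintegral_const_mul' _ _ (ENNReal.mul_ne_top (by finiteness)
          (ENNReal.inv_ne_top.2 (hμ.measure_ball_ne_zero hc h0 u hδ)))]
        gcongr
        exact hμ.lintegral_decay_le hc (by linarith) u hδ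
    _ = ENNReal.ofReal cK * ENNReal.ofReal c * decayConst c d (k - d) *
          ((μ (ball u δ))⁻¹ * μ (ball u δ)) := by ring
    _ = _ := by
        rw [ENNReal.inv_mul_cancel (hμ.measure_ball_ne_zero hc h0 u hδ) (hfin u δ), mul_one]

end Doubling

section Estimates

variable {M : Type} [MeasurableSpace M] {μ : Measure M}
  {c d k cK δ R q : ℝ} {x₀ : M} {K : M → M → ℝ} {f : M → ℝ}

/-- The smoothed density has total mass bounded by a constant. -/
lemma lintegral_smoothed_le [SFinite μ] {A : ℝ≥0∞}
    (hKm : Measurable fun z : M × M => K z.1 z.2) (hf : Measurable f)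
    (hf1 : ∫⁻ x, ENNReal.ofReal (f x) ∂μ = 1)
    (hA : ∀ u, ∫⁻ x, ENNReal.ofReal |K x u| ∂μ ≤ A) :
    ∫⁻ x, ∫⁻ u, ENNReal.ofReal (|K x u| * f u) ∂μ ∂μ ≤ A := by
  have hm : Measurable fun z : M × M => ENNReal.ofReal (|K z.1 z.2| * f z.2) := by fun_prop
  rw [lintegral_lintegral_swap hm.aemeasurable]
  calc ∫⁻ u, ∫⁻ x, ENNReal.ofReal (|K x u| * f u) ∂μ ∂μ
      ≤ ∫⁻ u, A * ENNReal.ofReal (f u) ∂μ := by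
        refine lintegral_mono fun u => ?_
        simp_rw [ENNReal.ofReal_mul (abs_nonneg _)]
        rw [lintegral_mul_const' _ _ ENNReal.ofReal_ne_top]
        gcongr
        exact hA u
    _ = A := by rw [lintegral_const_mul _ hf.ennreal_ofReal, hf1, mul_one]

/-- Hölder's inequality against the constant function `1` on a set `s`. -/
lemma setLIntegral_rpow_le {G : M → ℝ≥0∞} (hG : Measurable G) (hq0 : 0 ≤ q)
    (hq1 : q ≤ 1) (s : Set M) :
    ∫⁻ x in s, G x ^ q ∂μ ≤ (∫⁻ x, G x ∂μ) ^ q * μ s ^ (1 - q) := by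
  have h := ENNReal.lintegral_mul_norm_pow_le (μ := μ.restrict s) (f := G) (g := fun _ => 1)
    hG.aemeasurable aemeasurable_const hq0 (sub_nonneg.2 hq1) (by ring)
  simp only [ENNReal.one_rpow, mul_one, lintegral_const, one_mul, Measure.restrict_apply_univ] at h
  refine h.trans ?_
  gcongr
  exact Measure.restrict_le_self

/-- Off `B(x₀, 2R)`, twice the ball carrying `f`, the smoothed density decays like the
kernel centred at `x₀`. -/
lemma DoublingCond.smoothed_le_of_notMem [MetricSpace M] (hμ : DoublingCond μ c d)
    (hc : 1 ≤ c) (hk : 0 ≤ k)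
    (hδ : 0 < δ)
    (hK : ∀ x u, ENNReal.ofReal |K x u| ≤ ENNReal.ofReal cK * (μ (ball x δ))⁻¹ *
      ENNReal.ofReal ((1 + dist x u / δ) ^ (-k)))
    (hf : Measurable f) (hf1 : ∫⁻ x, ENNReal.ofReal (f x) ∂μ = 1)
    (hfs : ∀ x, x ∉ ball x₀ R → f x = 0) {x : M} (hx : x ∉ ball x₀ (2 * R)) :
    ∫⁻ u, ENNReal.ofReal (|K x u| * f u) ∂μ ≤
      ENNReal.ofReal cK * ENNReal.ofReal (2 ^ k) * ENNReal.ofReal c * (μ (ball x₀ δ))⁻¹ *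
        ENNReal.ofReal ((1 + dist x x₀ / δ) ^ (-(k - d))) := by
  have hpt (u : M) : ENNReal.ofReal (|K x u| * f u) ≤
      (ENNReal.ofReal cK * (μ (ball x δ))⁻¹ *
        ENNReal.ofReal (2 ^ k * (1 + dist x x₀ / δ) ^ (-k))) * ENNReal.ofReal (f u) := by
    by_cases hu : u ∈ ball x₀ R
    · rw [ENNReal.ofReal_mul (abs_nonneg _)]
      gcongr
      refine (hK x u).trans ?_
      gcongr
      rw [mem_ball] at hu
      rw [mem_ball, not_lt] at hx
      have h1 : dist x x₀ ≤ 2 * dist x u := by linarith [dist_triangle x u x₀]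
      have h2 : (1 + dist x x₀ / δ) / 2 ≤ 1 + dist x u / δ := by
        have : dist x x₀ / δ ≤ 2 * dist x u / δ := by gcongr
        rw [mul_div_assoc] at this
        linarith
      have h3 : 0 < 1 + dist x x₀ / δ := by positivity
      refine (Real.rpow_le_rpow_of_nonpos (by positivity) h2 (by linarith)).trans (le_of_eq ?_)
      rw [Real.div_rpow h3.le two_pos.le, Real.rpow_neg two_pos.le, div_inv_eq_mul, mul_comm]
    · simp [hfs u hu]
  calc ∫⁻ u, ENNReal.ofReal (|K x u| * f u) ∂μ
      ≤ _ := lintegral_mono hpt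
    _ = ENNReal.ofReal cK * ENNReal.ofReal (2 ^ k) *
          ((μ (ball x δ))⁻¹ * ENNReal.ofReal ((1 + dist x x₀ / δ) ^ (-k))) := by
        rw [lintegral_const_mul _ hf.ennreal_ofReal, hf1, mul_one,
          ENNReal.ofReal_mul (by positivity)]
        ring
    _ ≤ ENNReal.ofReal cK * ENNReal.ofReal (2 ^ k) * (ENNReal.ofReal c * (μ (ball x₀ δ))⁻¹ *
          ENNReal.ofReal ((1 + dist x x₀ / δ) ^ (-(k - d)))) := by
        gcongr ENNReal.ofReal cK * ENNReal.ofReal (2 ^ k) * ?_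
        exact hμ.kernel_bound_recentre hc k x x₀ hδ
    _ = _ := by ring

/-- Integral over the whole space of the `q`-th power of a decay bound centred at `x₀`, of the form
supplied by `DoublingCond.smoothed_le_of_notMem`. -/
lemma DoublingCond.lintegral_decay_rpow_le [MetricSpace M] [BorelSpace M]
    (hμ : DoublingCond μ c d) (hc : 1 ≤ c) (hδ : 0 < δ) {s : ℝ}
    (hq0 : 0 < q) (hs : 0 ≤ s) {B : ℝ≥0∞} (hB : B ≠ ∞)
    (h0 : μ (ball x₀ δ) ≠ 0) (ht : μ (ball x₀ δ) ≠ ∞) :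
    ∫⁻ x, (B * (μ (ball x₀ δ))⁻¹ * ENNReal.ofReal ((1 + dist x x₀ / δ) ^ (-s))) ^ q ∂μ ≤
      B ^ q * decayConst c d (s * q) * μ (ball x₀ δ) ^ (1 - q) := by
  have hi : (μ (ball x₀ δ))⁻¹ ≠ ∞ := ENNReal.inv_ne_top.2 h0
  have h1 (x : M) : (B * (μ (ball x₀ δ))⁻¹ * ENNReal.ofReal ((1 + dist x x₀ / δ) ^ (-s))) ^ q =
      (B * (μ (ball x₀ δ))⁻¹) ^ q * ENNReal.ofReal ((1 + dist x x₀ / δ) ^ (-(s * q))) := by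
    have h3 : 0 < 1 + dist x x₀ / δ := by positivity
    rw [ENNReal.mul_rpow_of_nonneg _ _ hq0.le,
      ENNReal.ofReal_rpow_of_nonneg (by positivity) hq0.le, ← Real.rpow_mul h3.le, neg_mul]
  simp_rw [h1]
  rw [lintegral_const_mul' _ _
    (ENNReal.rpow_ne_top_of_nonneg hq0.le (ENNReal.mul_ne_top hB hi))]
  refine (mul_le_mul_right (hμ.lintegral_decay_le hc (by positivity) x₀ hδ) _).trans (le_of_eq ?_)
  rw [ENNReal.mul_rpow_of_nonneg _ _ hq0.le, ENNReal.inv_rpow, ENNReal.rpow_sub _ _ h0 ht,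
    ENNReal.rpow_one, div_eq_mul_inv]
  ring

end Estimates

/-- In a doubling (dimension `d`, constant `c₀' ≥ 1`) metric measure
space, for `1 ≤ p < 2` and `k > d(1 + 2/p)` there is `c = c(p,k,c_K,c₀',d) > 0` such
that for every `δ > 0`, `x₀`, `R ≥ δ/2`, every kernel with
`|K(x,u)| ≤ c_K μ(B(x,δ))⁻¹ (1 + ρ(x,u)/δ)^{-k}` and every pdf `f` supported in
`B(x₀,R)`: `(∫ (∫ |K(x,u)| f(u) dμ(u))^{p/2} dμ(x))^{1/p} ≤ c μ(B(x₀,R))^{1/p-1/2}`. -/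
theorem kernel_density_compact_support_bound
    (p k cK c₀' d : ℝ) (hp1 : 1 ≤ p) (hp2 : p < 2) (hk : d * (1 + 2 / p) < k)
    (hcK : 0 < cK) (hc₀' : 1 ≤ c₀') (hd : 0 < d) :
    ∃ c > (0 : ℝ),
      ∀ (M : Type) [MetricSpace M] [MeasurableSpace M] [BorelSpace M] (μ : Measure M),
      (∀ (x : M) (r l : ℝ), 0 < r → 1 < l →
        μ (ball x (l * r)) ≤ ENNReal.ofReal (c₀' * l ^ d) * μ (ball x r)) →
      ∀ (δ : ℝ), 0 < δ → ∀ (x₀ : M) (R : ℝ), δ / 2 ≤ R →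
      ∀ (K : M → M → ℝ), Measurable (fun z : M × M => K z.1 z.2) →
        (∀ x u, ENNReal.ofReal |K x u| ≤
          ENNReal.ofReal cK * (μ (ball x δ))⁻¹ *
            ENNReal.ofReal ((1 + dist x u / δ) ^ (-k))) →
      ∀ (f : M → ℝ), Measurable f → (∀ x, 0 ≤ f x) →
        (∫⁻ x, ENNReal.ofReal (f x) ∂μ) = 1 →
        (∀ x, x ∉ ball x₀ R → f x = 0) →
        (∫⁻ x, (∫⁻ u, ENNReal.ofReal (|K x u| * f u) ∂μ) ^ (p / 2) ∂μ) ^ (1 / p) ≤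
          ENNReal.ofReal c * μ (ball x₀ R) ^ (1 / p - 1 / 2) := by
  set q : ℝ := p / 2 with hq
  have hp0 : 0 < p := by linarith
  have hq0 : 0 < q := by positivity
  have hq1 : q < 1 := by rw [hq]; linarith
  have hkq : d < (k - d) * q := by
    have h1 : d * (2 / p) < k - d := by linarith
    calc d = d * (2 / p) * q := by rw [hq]; field_simp
      _ < (k - d) * q := by gcongr
  have hkd : d < k - d := by nlinarith
  set A : ℝ≥0∞ := ENNReal.ofReal cK * ENNReal.ofReal c₀' * decayConst c₀' d (k - d) with hA
  set B : ℝ≥0∞ := ENNReal.ofReal cK * ENNReal.ofReal (2 ^ k) * ENNReal.ofReal c₀' with hB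
  set D : ℝ≥0∞ := ENNReal.ofReal (c₀' * 2 ^ d) with hD
  -- `A ^ q` comes from the near region, the other summand from the far region, and
  -- `D ^ (1 - q)` from comparing both `B(x₀, 2R)` and `B(x₀, δ)` with `B(x₀, R)`.
  set C : ℝ≥0∞ := (A ^ q + B ^ q * decayConst c₀' d ((k - d) * q)) * D ^ (1 - q) with hC
  have hBt : B ≠ ∞ := by rw [hB]; finiteness
  have hCt : C ≠ ∞ := by
    have h1 := decayConst_ne_top (c := c₀') hkd
    have h2 := decayConst_ne_top (c := c₀') hkq
    have hAt : A ≠ ∞ := ENNReal.mul_ne_top (by finiteness) h1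
    exact ENNReal.mul_ne_top (ENNReal.add_ne_top.2 ⟨ENNReal.rpow_ne_top_of_nonneg hq0.le hAt,
      ENNReal.mul_ne_top (ENNReal.rpow_ne_top_of_nonneg hq0.le hBt) h2⟩)
      (ENNReal.rpow_ne_top_of_nonneg (by linarith) ENNReal.ofReal_ne_top)
  have hCp : C ^ (1 / p) ≠ ∞ := ENNReal.rpow_ne_top_of_nonneg (by positivity) hCt
  refine ⟨(C ^ (1 / p)).toReal + 1, by positivity, ?_⟩
  intro M _ _ _ μ hμ' δ hδ x₀ R hR K hKm hK f hf hf0 hf1 hfs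
  have hμ : DoublingCond μ c₀' d := hμ'
  have hR0 : 0 < R := by linarith
  have hμ0 : μ ≠ 0 := by
    rintro rfl
    simp at hf1
  by_cases hfin : ∀ y r, μ (ball y r) ≠ ∞
  swap
  · push Not at hfin
    obtain ⟨y, r, hyr⟩ := hfin
    have hK0 (x u : M) : |K x u| = 0 := by
      have h := hK x u
      rw [hμ.measure_ball_eq_top hc₀' hyr x hδ] at h
      simpa using h
    simp [hK0, hq0, hp0]
  have : SigmaFinite μ := sigmaFinite_of_measure_ball_ne_top x₀ (hfin x₀)
  set G : M → ℝ≥0∞ := fun x => ∫⁻ u, ENNReal.ofReal (|K x u| * f u) ∂μ with hG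
  have hGm : Measurable G := by
    have hm : Measurable fun z : M × M => ENNReal.ofReal (|K z.1 z.2| * f z.2) := by fun_prop
    exact hm.lintegral_prod_right'
  have hGA : ∫⁻ x, G x ∂μ ≤ A := lintegral_smoothed_le hKm hf hf1
    (hμ.lintegral_kernel_le hc₀' (by linarith) hδ hfin hK hμ0)
  have h2R : μ (ball x₀ (2 * R)) ≤ D * μ (ball x₀ R) :=
    hμ.le_of_one_le hc₀' x₀ hR0 one_le_two
  have hδR : μ (ball x₀ δ) ≤ D * μ (ball x₀ R) :=
    (measure_mono (ball_subset_ball (by linarith))).trans h2R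
  have hq1' : 0 ≤ 1 - q := by linarith
  have hnear : ∫⁻ x in ball x₀ (2 * R), G x ^ q ∂μ ≤ A ^ q * (D * μ (ball x₀ R)) ^ (1 - q) :=
    (setLIntegral_rpow_le hGm hq0.le hq1.le _).trans (by gcongr)
  have hfar : ∫⁻ x in (ball x₀ (2 * R))ᶜ, G x ^ q ∂μ ≤
      B ^ q * decayConst c₀' d ((k - d) * q) * (D * μ (ball x₀ R)) ^ (1 - q) := by
    refine le_trans ?_ ((hμ.lintegral_decay_rpow_le hc₀' hδ hq0 (by linarith : 0 ≤ k - d) hBt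
      (hμ.measure_ball_ne_zero hc₀' hμ0 x₀ hδ) (hfin x₀ δ)).trans (by gcongr))
    refine le_trans (setLIntegral_mono' measurableSet_ball.compl fun x hx => ?_)
      (setLIntegral_le_lintegral (ball x₀ (2 * R))ᶜ _)
    gcongr
    exact hμ.smoothed_le_of_notMem hc₀' (by linarith) hδ hK hf hf1 hfs hx
  have hmain : ∫⁻ x, G x ^ q ∂μ ≤ C * μ (ball x₀ R) ^ (1 - q) := by
    rw [← lintegral_add_compl _ (measurableSet_ball (x := x₀) (ε := 2 * R))]
    refine (add_le_add hnear hfar).trans (le_of_eq ?_)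
    rw [ENNReal.mul_rpow_of_nonneg _ _ hq1', hC]
    ring
  calc (∫⁻ x, G x ^ q ∂μ) ^ (1 / p)
      ≤ (C * μ (ball x₀ R) ^ (1 - q)) ^ (1 / p) := by gcongr
    _ = C ^ (1 / p) * μ (ball x₀ R) ^ (1 / p - 1 / 2) := by
        rw [ENNReal.mul_rpow_of_nonneg _ _ (by positivity), ← ENNReal.rpow_mul]
        congr 2
        rw [hq]
        field_simp
    _ ≤ _ := by
        gcongr
        rw [ENNReal.le_ofReal_iff_toReal_le hCp (by positivity)]
        linarith
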